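/- (Dougall's ₂H₂ summation.) Let a,b,c,d ∈ ℂ with c,d ∉ ℤ, a and b not positive integers, and Re(c+d−a−b−1) > 0. Then Σ_{k=−∞}^{∞} ((a)_k(b)_k)/((c)_k(d)_k) = Γ(1−a)Γ(1−b)Γ(c)Γ(d)Γ(c+d−a−b−1)/(Γ(c−a)Γ(c−b)Γ(d−a)Γ(d−b)), the bilateral sum converging absolutely. -/

import Mathlib

open Complex

/-- The shifted factorial `(a)_k = Γ(a+k)/Γ(a)` for integer `k`, given by the
(generically equal) product formulas. -/
noncomputable def poch (a : ℂ) (k : ℤ) : ℂ :=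
  if 0 ≤ k then ∏ j ∈ Finset.range k.toNat, (a + (j : ℂ))
  else (∏ j ∈ Finset.range (-k).toNat, (a - 1 - (j : ℂ)))⁻¹

/-!
By Cauchy's integral
`∫_{-π/2}^{π/2} (2 cos x)^s e^{iwx} dx = π Γ(s+1) / (Γ((s+w)/2+1) Γ((s-w)/2+1))`,
the numbers `1 / (Γ(c+k) Γ(e-k))` are, up to a constant, Fourier coefficients of
`(2 cos x)^(c+e-2) e^{i(c-e)x}`. By the reflection formula the `₂H₂` series is a constant times
`∑ 1 / (Γ(c+k) Γ(d+k) Γ(e-k) Γ(f-k))` with `e = 1-a` and `f = 1-b`, so Parseval's identity turns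
it into a second Cauchy integral when `Re(c+e)` and `Re(d+f)` exceed `2`. A telescoping relation
between the sums with parameters `d` and `d+1`, and its mirror image in `c`, then reach all
parameters for which the series converges.
-/

section GammaAsymptotics

open Filter Topology Asymptotics

theorem inv_Gamma_eq_prod_mul_inv_Gamma_add_nat (z : ℂ) (n : ℕ) :
    (Gamma z)⁻¹ = (∏ j ∈ Finset.range n, (z + j)) * (Gamma (z + n))⁻¹ := by
  induction n with
  | zero => simp
  | succ n ih =>
    rw [ih, one_div_Gamma_eq_self_mul_one_div_Gamma_add_one (z + n), Finset.prod_range_succ,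
      Nat.cast_succ, mul_assoc, add_assoc z]

theorem Gamma_mul_prod_range_add {z : ℂ} (hz : Gamma z ≠ 0) (n : ℕ) :
    Gamma z * ∏ j ∈ Finset.range n, (z + j) = Gamma (z + n) := by
  have h := inv_Gamma_eq_prod_mul_inv_Gamma_add_nat z n
  have hne : (∏ j ∈ Finset.range n, (z + j)) * (Gamma (z + n))⁻¹ ≠ 0 := h ▸ inv_ne_zero hz
  rw [← inv_inv (Gamma z), h, mul_inv, inv_inv, mul_right_comm,
    inv_mul_cancel₀ (left_ne_zero_of_mul hne), one_mul]

theorem isEquivalent_add_natCast (z : ℂ) :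
    (fun n : ℕ ↦ z + n) ~[atTop] fun n : ℕ ↦ (n : ℂ) :=
  IsEquivalent.refl.const_add_of_norm_tendsto_atTop
    (tendsto_norm_atTop_iff_cobounded.mpr (tendsto_natCast_atTop_cobounded (α := ℂ)))

theorem isEquivalent_Gamma_add_one_add_nat_of_re_pos {z : ℂ} (hz : 0 < z.re) :
    (fun n : ℕ ↦ Gamma (z + 1 + n)) ~[atTop] fun n : ℕ ↦ (n : ℂ) ^ (z + 1) * Gamma n := by
  have hΓ : Gamma z ≠ 0 := Gamma_ne_zero_of_re_pos hz
  have hlim : Tendsto ((fun _ ↦ Gamma z) / GammaSeq z) atTop (𝓝 1) := by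
    simpa [hΓ] using (tendsto_const_nhds (x := Gamma z)).div (GammaSeq_tendsto_Gamma z) hΓ
  refine isEquivalent_of_tendsto_one (hlim.congr' ?_)
  filter_upwards [eventually_ne_atTop 0] with n hn
  have hn : (n : ℂ) ≠ 0 := Nat.cast_ne_zero.mpr hn
  have hprod : Gamma z * ∏ j ∈ Finset.range (n + 1), (z + j) = Gamma (z + 1 + n) := by
    rw [Gamma_mul_prod_range_add hΓ, Nat.cast_succ, add_comm (n : ℂ), add_assoc]
  rw [Pi.div_apply, GammaSeq, div_div_eq_mul_div, hprod, ← Gamma_nat_eq_factorial,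
    Gamma_add_one _ hn, ← mul_assoc, Pi.div_apply, cpow_add _ _ hn, cpow_one]

theorem isEquivalent_Gamma_add_nat_of_add_one {z : ℂ}
    (h : (fun n : ℕ ↦ Gamma (z + 1 + n)) ~[atTop] fun n : ℕ ↦ (n : ℂ) ^ (z + 1) * Gamma n) :
    (fun n : ℕ ↦ Gamma (z + n)) ~[atTop] fun n : ℕ ↦ (n : ℂ) ^ z * Gamma n := by
  refine ((h.div (isEquivalent_add_natCast z)).congr_left ?_).congr_right ?_
  · filter_upwards [tendsto_natCast_atTop_cobounded.eventually_ne_cobounded (-z)] with n hn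
    have hzn : z + n ≠ 0 := fun h ↦ hn (eq_neg_of_add_eq_zero_right h)
    rw [Pi.div_apply, add_right_comm, Gamma_add_one _ hzn, mul_div_cancel_left₀ _ hzn]
  · filter_upwards [eventually_ne_atTop 0] with n hn
    have hn : (n : ℂ) ≠ 0 := Nat.cast_ne_zero.mpr hn
    rw [Pi.div_apply, cpow_add _ _ hn, cpow_one]
    field_simp

theorem isEquivalent_Gamma_add_nat (z : ℂ) :
    (fun n : ℕ ↦ Gamma (z + n)) ~[atTop] fun n : ℕ ↦ (n : ℂ) ^ z * Gamma n := by
  obtain ⟨N, hN⟩ := exists_nat_gt (-z.re)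
  replace hN : 0 < (z + N).re := by simpa [neg_lt_iff_pos_add'] using hN
  induction N generalizing z with
  | zero =>
    exact isEquivalent_Gamma_add_nat_of_add_one
      (isEquivalent_Gamma_add_one_add_nat_of_re_pos (by simpa using hN))
  | succ N ih =>
    refine isEquivalent_Gamma_add_nat_of_add_one (ih _ ?_)
    rwa [Nat.cast_succ, add_comm (N : ℂ), ← add_assoc] at hN

end GammaAsymptotics

section CauchyIntegral

open Filter Topology Asymptotics MeasureTheory Set
open scoped Real

/-- The integrand `(2 cos x)^s e^{iwx}` of Cauchy's integral. -/
noncomputable def cosKernel (s w : ℂ) (x : ℝ) : ℂ :=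
  (2 * cos x) ^ s * exp (I * w * x)

/-- Cauchy's integral `∫ (2 cos x)^s e^{iwx} dx` over `[-π/2, π/2]`. -/
noncomputable def cosIntegral (s w : ℂ) : ℂ :=
  ∫ x in -(π / 2)..π / 2, cosKernel s w x

theorem neg_pi_div_two_lt_pi_div_two : -(π / 2) < π / 2 :=
  neg_lt_self Real.pi_div_two_pos

theorem continuous_cosKernel {s : ℂ} (hs : 0 < s.re) (w : ℂ) : Continuous (cosKernel s w) := by
  unfold cosKernel
  have hbase : Continuous fun x : ℝ ↦ 2 * Real.cos x := by fun_prop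
  have hpow := (continuous_ofReal_cpow_const hs).comp hbase
  simp only [Function.comp_def, ofReal_mul, ofReal_ofNat, ofReal_cos] at hpow
  fun_prop

theorem cosKernel_neg (s w : ℂ) (x : ℝ) : cosKernel s w (-x) = cosKernel s (-w) x := by
  simp [cosKernel]

theorem cosKernel_mul_exp (s w v : ℂ) (x : ℝ) :
    cosKernel s w x * exp (I * v * x) = cosKernel s (w + v) x := by
  rw [cosKernel, cosKernel, mul_assoc, ← exp_add]
  ring_nf

theorem cosKernel_mul_cosKernel {s t : ℂ} (hs : 0 < s.re) (ht : 0 < t.re) (v w : ℂ) (x : ℝ) :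
    cosKernel s v x * cosKernel t w x = cosKernel (s + t) (v + w) x := by
  have hs0 : s ≠ 0 := ne_zero_of_re_pos hs
  have hst : s + t ≠ 0 := fun h ↦ (add_pos hs ht).ne' (congrArg re h)
  rw [← cosKernel_mul_exp (s + t)]
  simp only [cosKernel]
  obtain hx | hx := eq_or_ne (2 * cos x : ℂ) 0
  · simp only [hx, zero_cpow hs0, zero_cpow hst, zero_mul]
  · rw [cpow_add _ _ hx]
    ring

theorem cosKernel_add_two_mul_nat {s : ℂ} (hs : 0 < s.re) (w : ℂ) (n : ℕ) (x : ℝ) :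
    cosKernel (s + 2 * n) w x = ((2 * Real.cos x) ^ 2) ^ n • cosKernel s w x := by
  induction n with
  | zero => simp
  | succ n ih =>
    have h2 : cosKernel 2 0 x = (2 * cos x) ^ 2 := by simp [cosKernel]
    have hre : 0 < (s + 2 * n).re := by simpa using by positivity
    rw [Nat.cast_succ, mul_add_one, ← add_assoc, ← add_zero w,
      ← cosKernel_mul_cosKernel hre (by norm_num), add_zero, ih, h2, pow_succ]
    simp only [real_smul]
    push_cast
    ring

theorem hasDerivAt_cosKernel (s w : ℂ) {x : ℝ} (hx : 0 < Real.cos x) :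
    HasDerivAt (cosKernel s w)
      (I * ((s + w) * cosKernel s w x - 2 * s * cosKernel (s - 1) (w - 1) x)) x := by
  have hpos : 2 * cos (x : ℂ) ∈ slitPlane := by
    rw [← ofReal_cos]
    exact_mod_cast ofReal_mem_slitPlane.mpr (by positivity : 0 < 2 * Real.cos x)
  have hpow : (2 * cos (x : ℂ)) ^ s = (2 * cos (x : ℂ)) ^ (s - 1) * (2 * cos x) := by
    conv_lhs => rw [← sub_add_cancel s 1, cpow_add _ _ (slitPlane_ne_zero hpos), cpow_one]
  have hexp : exp (I * w * x) = exp (I * (w - 1) * x) * (cos x + sin x * I) := by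
    rw [← exp_mul_I, ← exp_add]
    ring_nf
  have hderiv := ((((hasDerivAt_cos (x : ℂ)).const_mul 2).cpow_const (c := s) hpos).mul
    (((hasDerivAt_id (x : ℂ)).const_mul (I * w)).cexp)).comp_ofReal
  refine hderiv.congr_deriv ?_
  simp only [cosKernel, id, hpow, hexp]
  linear_combination (-2 * s * (2 * cos (x : ℂ)) ^ (s - 1) * exp (I * (w - 1) * x)) *
    (I * sin_sq_add_cos_sq (x : ℂ) + sin x * cos x * I_sq)

theorem add_mul_cosIntegral {s : ℂ} (hs : 1 < s.re) (w : ℂ) :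
    (s + w) * cosIntegral s w = 2 * s * cosIntegral (s - 1) (w - 1) := by
  have hs0 : 0 < s.re := one_pos.trans hs
  have hs1 : 0 < (s - 1).re := by simpa using hs
  have hcont := continuous_cosKernel hs0 w
  have hcont' := continuous_cosKernel hs1 (w - 1)
  have hs_ne : s ≠ 0 := ne_zero_of_re_pos hs0
  have hftc := intervalIntegral.integral_eq_sub_of_hasDerivAt_of_le neg_pi_div_two_lt_pi_div_two.le
    hcont.continuousOn (fun x hx ↦ hasDerivAt_cosKernel s w (Real.cos_pos_of_mem_Ioo hx))
    (Continuous.intervalIntegrable (by fun_prop) _ _)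
  have hright : cosKernel s w (π / 2) = 0 := by simp [cosKernel, hs_ne]
  have hleft : cosKernel s w (-(π / 2) : ℝ) = 0 := by simp [cosKernel, hs_ne]
  rw [hright, hleft, sub_zero, intervalIntegral.integral_const_mul,
    intervalIntegral.integral_sub (Continuous.intervalIntegrable (by fun_prop) _ _)
      (Continuous.intervalIntegrable (by fun_prop) _ _),
    intervalIntegral.integral_const_mul, intervalIntegral.integral_const_mul] at hftc
  exact sub_eq_zero.mp ((mul_eq_zero.mp hftc).resolve_left I_ne_zero)

theorem cosIntegral_neg (s w : ℂ) : cosIntegral s (-w) = cosIntegral s w := by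
  simp only [cosIntegral, ← cosKernel_neg]
  rw [intervalIntegral.integral_comp_neg (cosKernel s w), neg_neg]

theorem mul_cosIntegral_add_two {s : ℂ} (hs : 0 < s.re) (w : ℂ) :
    (s + w + 2) * (s - w + 2) * cosIntegral (s + 2) w =
      4 * (s + 1) * (s + 2) * cosIntegral s w := by
  have h₁ := add_mul_cosIntegral (s := s + 2) (by rw [add_re, re_ofNat]; linarith) w
  have h₂ := add_mul_cosIntegral (s := s + 1) (by simpa using hs) (1 - w)
  rw [← cosIntegral_neg (s + 1), add_sub_cancel_right, sub_sub_cancel_left, cosIntegral_neg s] at h₂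
  ring_nf at h₁ h₂ ⊢
  linear_combination (s - w + 2) * h₁ + (2 * (s + 2)) * h₂

/-- The closed form `Γ(s+1) / (Γ((s+w)/2+1) Γ((s-w)/2+1))` of Cauchy's integral divided by `π`.
Since `Gamma` is `0` at its poles, `(Gamma z)⁻¹` is the entire function `1/Γ`. -/
noncomputable def cauchyRatio (s w : ℂ) : ℂ :=
  Gamma (s + 1) * (Gamma ((s + w) / 2 + 1))⁻¹ * (Gamma ((s - w) / 2 + 1))⁻¹

theorem mul_cauchyRatio_add_two {s : ℂ} (hs : 0 < s.re) (w : ℂ) :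
    (s + w + 2) * (s - w + 2) * cauchyRatio (s + 2) w =
      4 * (s + 1) * (s + 2) * cauchyRatio s w := by
  have hs₁ : s + 1 ≠ 0 := ne_zero_of_re_pos (by rw [add_re, one_re]; linarith)
  have hs₂ : s + 2 ≠ 0 := ne_zero_of_re_pos (by rw [add_re, re_ofNat]; linarith)
  have hΓ : Gamma (s + 2 + 1) = (s + 2) * ((s + 1) * Gamma (s + 1)) := by
    rw [Gamma_add_one _ hs₂, ← Gamma_add_one _ hs₁, add_assoc, one_add_one_eq_two]
  rw [cauchyRatio, cauchyRatio, hΓ,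
    one_div_Gamma_eq_self_mul_one_div_Gamma_add_one ((s + w) / 2 + 1),
    one_div_Gamma_eq_self_mul_one_div_Gamma_add_one ((s - w) / 2 + 1)]
  ring_nf

theorem cosIntegral_mul_cauchyRatio {s : ℂ} (hs : 0 < s.re) (w : ℂ) (n : ℕ) :
    cosIntegral s w * cauchyRatio (s + 2 * n) w = cauchyRatio s w * cosIntegral (s + 2 * n) w := by
  induction n generalizing s with
  | zero => simp [mul_comm]
  | succ n ih =>
    have hs₁ : s + 1 ≠ 0 := ne_zero_of_re_pos (by rw [add_re, one_re]; linarith)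
    have hs₂ : s + 2 ≠ 0 := ne_zero_of_re_pos (by rw [add_re, re_ofNat]; linarith)
    have hne : 4 * (s + 1) * (s + 2) ≠ 0 := by simp [hs₁, hs₂]
    have hshift := ih (s := s + 2) (by rw [add_re, re_ofNat]; linarith)
    rw [add_assoc, add_comm 2, ← mul_add_one, ← Nat.cast_succ] at hshift
    refine mul_left_cancel₀ hne ?_
    rw [← mul_assoc, ← mul_assoc, ← mul_cosIntegral_add_two hs, ← mul_cauchyRatio_add_two hs,
      mul_assoc, hshift, mul_assoc _ _ (cosIntegral _ _)]

theorem tendsto_inv_integral_cos_pow_smul_integral {E : Type*} [NormedAddCommGroup E]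
    [NormedSpace ℝ E] [CompleteSpace E] {f : ℝ → E}
    (hf : ContinuousOn f (Icc (-(π / 2)) (π / 2))) :
    Tendsto (fun n : ℕ ↦ (∫ x in -(π / 2)..π / 2, ((2 * Real.cos x) ^ 2) ^ n)⁻¹ •
      ∫ x in -(π / 2)..π / 2, ((2 * Real.cos x) ^ 2) ^ n • f x) atTop (𝓝 (f 0)) := by
  simp_rw [intervalIntegral.integral_of_le neg_pi_div_two_lt_pi_div_two.le,
    ← integral_Icc_eq_integral_Ioc]
  refine tendsto_setIntegral_pow_smul_of_unique_maximum_of_isCompact_of_continuousOn isCompact_Icc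
    (by fun_prop) (fun y hy hy0 ↦ ?_) (fun _ _ ↦ by positivity) (by simp) ?_ hf
  · have hcos_lt : Real.cos y < 1 :=
      (Real.cos_le_one y).lt_of_ne fun h ↦ hy0 <|
        (Real.cos_eq_one_iff_of_lt_of_lt (by linarith [hy.1, Real.pi_pos])
          (by linarith [hy.2, Real.pi_pos])).mp h
    have hcos_nonneg := Real.cos_nonneg_of_mem_Icc hy
    rw [Real.cos_zero]
    nlinarith
  · rw [interior_Icc, closure_Ioo neg_pi_div_two_lt_pi_div_two.ne]
    exact ⟨neg_nonpos.mpr Real.pi_div_two_pos.le, Real.pi_div_two_pos.le⟩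

theorem tendsto_cosIntegral_div_integral_cos_pow {s : ℂ} (hs : 0 < s.re) (w : ℂ) :
    Tendsto (fun n : ℕ ↦ cosIntegral (s + 2 * n) w /
      ((∫ x in -(π / 2)..π / 2, ((2 * Real.cos x) ^ 2) ^ n : ℝ) : ℂ)) atTop (𝓝 (2 ^ s)) := by
  have h := tendsto_inv_integral_cos_pow_smul_integral (continuous_cosKernel hs w).continuousOn
  have h0 : cosKernel s w 0 = 2 ^ s := by simp [cosKernel]
  simpa only [cosIntegral, cosKernel_add_two_mul_nat hs, h0, real_smul, ofReal_inv,
    inv_mul_eq_div] using h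

theorem isEquivalent_cauchyRatio (s w : ℂ) :
    (fun n : ℕ ↦ cauchyRatio (s + 2 * n) w) ~[atTop]
      fun n : ℕ ↦ 2 ^ (s + 1) * (Gamma (2 * n) / (n * Gamma n ^ 2)) := by
  have hnum := (isEquivalent_Gamma_add_nat (s + 1)).comp_tendsto
    (tendsto_id.const_mul_atTop' (r := 2) two_pos)
  have hu := (isEquivalent_Gamma_add_nat ((s + w) / 2 + 1)).inv
  have hv := (isEquivalent_Gamma_add_nat ((s - w) / 2 + 1)).inv
  refine (((hnum.mul hu).mul hv).congr_left (.of_eq <| funext fun n ↦ ?_)).congr_right ?_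
  · simp only [Pi.mul_apply, Pi.inv_apply, Function.comp_apply, id, cauchyRatio]
    push_cast
    ring_nf
  · filter_upwards [eventually_ne_atTop 0] with n hn
    have hn₀ : (n : ℂ) ≠ 0 := Nat.cast_ne_zero.mpr hn
    have hpow : (n : ℂ) ^ ((s + w) / 2 + 1) * (n : ℂ) ^ ((s - w) / 2 + 1) = n ^ (s + 1) * n := by
      rw [← cpow_add _ _ hn₀, show (s + w) / 2 + 1 + ((s - w) / 2 + 1) = s + 1 + 1 by ring,
        cpow_add _ _ hn₀, cpow_one]
    simp only [Pi.mul_apply, Pi.inv_apply, Function.comp_apply, id]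
    rw [Nat.cast_mul, natCast_mul_natCast_cpow, Nat.cast_ofNat, mul_assoc, ← mul_inv,
      mul_mul_mul_comm (_ ^ _), hpow]
    have hpow_ne : (n : ℂ) ^ (s + 1) ≠ 0 := by simp [hn₀]
    field_simp

theorem tendsto_cauchyRatio_div_cauchyRatio (s w : ℂ) :
    Tendsto (fun n : ℕ ↦ cauchyRatio (s + 2 * n) w / cauchyRatio (2 + 2 * n) 0) atTop
      (𝓝 (2 ^ (s - 2))) := by
  refine ((isEquivalent_cauchyRatio s w).div (isEquivalent_cauchyRatio 2 0)).symm.tendsto_nhds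
    (tendsto_const_nhds.congr' ?_)
  filter_upwards [eventually_ne_atTop 0] with n hn
  have hΓ : Gamma n ≠ 0 := Gamma_ne_zero_of_re_pos (by simpa [Nat.pos_iff_ne_zero] using hn)
  have hΓ₂ : Gamma (2 * n) ≠ 0 :=
    Gamma_ne_zero_of_re_pos (by simpa [Nat.pos_iff_ne_zero] using hn)
  rw [Pi.div_apply, mul_div_mul_right _ _ (by positivity), ← cpow_sub _ _ two_ne_zero]
  ring_nf

theorem tendsto_cosIntegral_div_cosIntegral {s : ℂ} (hs : 0 < s.re) (w : ℂ) :
    Tendsto (fun n : ℕ ↦ cosIntegral (s + 2 * n) w / cosIntegral (2 + 2 * n) 0) atTop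
      (𝓝 (2 ^ (s - 2))) := by
  have hden := tendsto_cosIntegral_div_integral_cos_pow (s := 2) two_pos 0
  have hlim : (2 : ℂ) ^ (2 : ℂ) ≠ 0 := by simp
  have h := (tendsto_cosIntegral_div_integral_cos_pow hs w).div hden hlim
  rw [← cpow_sub _ _ two_ne_zero] at h
  refine h.congr' ?_
  filter_upwards [hden.eventually_ne hlim] with n hn
  rw [Pi.div_apply, div_div_div_cancel_right₀ (div_ne_zero_iff.mp hn).2]

theorem cosIntegral_two_zero : cosIntegral 2 0 = 2 * π := by
  have hker : cosKernel 2 0 = fun x : ℝ ↦ ((4 * Real.cos x ^ 2 : ℝ) : ℂ) := by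
    ext x
    simp only [cosKernel, cpow_ofNat, mul_zero, zero_mul, exp_zero, mul_one, ofReal_mul,
      ofReal_ofNat, ofReal_pow, ofReal_cos]
    ring
  rw [cosIntegral, hker, intervalIntegral.integral_ofReal, intervalIntegral.integral_const_mul,
    integral_cos_sq]
  simp only [Real.cos_pi_div_two, Real.sin_pi_div_two, mul_one, Real.cos_neg, Real.sin_neg,
    mul_neg, neg_zero, sub_self, zero_add, sub_neg_eq_add, add_halves, ofReal_mul, ofReal_ofNat,
    ofReal_div]
  ring

theorem cosIntegral_eq_pi_mul_cauchyRatio {s : ℂ} (hs : 0 < s.re) (w : ℂ) :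
    cosIntegral s w = π * cauchyRatio s w := by
  have hbase (n : ℕ) : cosIntegral (2 + 2 * n) 0 = π * cauchyRatio (2 + 2 * n) 0 := by
    have hratio : cauchyRatio 2 0 = 2 := by
      have hΓ : Gamma 3 = 2 := by exact_mod_cast Gamma_nat_eq_factorial 2
      norm_num [cauchyRatio, hΓ]
    have h := cosIntegral_mul_cauchyRatio (s := 2) two_pos 0 n
    rw [cosIntegral_two_zero, hratio, mul_assoc] at h
    exact (mul_left_cancel₀ two_ne_zero h).symm
  have hlim : (2 : ℂ) ^ (s - 2) ≠ 0 := by simp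
  refine mul_right_cancel₀ hlim (tendsto_nhds_unique
    ((tendsto_cauchyRatio_div_cauchyRatio s w).const_mul _)
    (((tendsto_cosIntegral_div_cosIntegral hs w).const_mul _).congr fun n ↦ ?_))
  rw [hbase n, mul_div_assoc', mul_div_assoc', mul_assoc, ← cosIntegral_mul_cauchyRatio hs,
    mul_div_mul_left _ _ (ofReal_ne_zero.mpr Real.pi_ne_zero)]

end CauchyIntegral

section Parseval

open MeasureTheory Set
open scoped Real

theorem inner_star_fourierBasis {T : ℝ} [Fact (0 < T)]
    (f : Lp ℂ 2 (AddCircle.haarAddCircle (T := T))) (n : ℤ) :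
    inner ℂ (star f) (fourierBasis n) = fourierCoeff f (-n) := by
  rw [coe_fourierBasis, L2.inner_def]
  refine integral_congr_ae ?_
  filter_upwards [Lp.coeFn_star f, coeFn_fourierLp 2 n] with t hft ht
  rw [RCLike.inner_apply, hft, ht, Pi.star_apply, RCLike.star_def, conj_conj, neg_neg, smul_eq_mul]

theorem inner_star_eq_integral_mul {T : ℝ} [Fact (0 < T)]
    (f g : Lp ℂ 2 (AddCircle.haarAddCircle (T := T))) :
    inner ℂ (star f) g = ∫ t, f t * g t ∂AddCircle.haarAddCircle := by
  rw [L2.inner_def]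
  refine integral_congr_ae ?_
  filter_upwards [Lp.coeFn_star f] with t hft
  simp [hft, mul_comm]

/- Parseval for the inner product of `star f` and `g`: the conjugate turns the sesquilinear pairing
into a bilinear one. -/
theorem hasSum_fourierCoeff_neg_mul_fourierCoeff {T : ℝ} [Fact (0 < T)]
    (f g : Lp ℂ 2 (AddCircle.haarAddCircle (T := T))) :
    HasSum (fun n : ℤ ↦ fourierCoeff f (-n) * fourierCoeff g n)
      (∫ t, f t * g t ∂AddCircle.haarAddCircle) := by
  rw [← inner_star_eq_integral_mul]
  refine (fourierBasis.hasSum_inner_mul_inner (star f) g).congr_fun fun n ↦ ?_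
  rw [inner_star_fourierBasis, ← HilbertBasis.repr_apply_apply, fourierBasis_repr]

theorem hasSum_fourierCoeffOn_neg_mul_fourierCoeffOn {a b : ℝ} (hab : a < b) {f g : ℝ → ℂ}
    (hf : MemLp f 2 (volume.restrict (Ioc a b))) (hg : MemLp g 2 (volume.restrict (Ioc a b))) :
    HasSum (fun n : ℤ ↦ fourierCoeffOn hab f (-n) * fourierCoeffOn hab g n)
      ((b - a)⁻¹ • ∫ x in a..b, f x * g x) := by
  have hpos : Fact (0 < b - a) := ⟨sub_pos.mpr hab⟩
  rw [← add_sub_cancel a b] at hf hg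
  have hf' := hf.memLp_liftIoc.haarAddCircle
  have hg' := hg.memLp_liftIoc.haarAddCircle
  convert hasSum_fourierCoeff_neg_mul_fourierCoeff hf'.toLp hg'.toLp
  · rw [fourierCoeff_congr_ae hf'.coeFn_toLp, fourierCoeff_liftIoc_eq]
    simp
  · rw [fourierCoeff_congr_ae hg'.coeFn_toLp, fourierCoeff_liftIoc_eq]
    simp
  · nth_rw 2 [← add_sub_cancel a b]
    rw [← AddCircle.integral_liftIoc_eq_intervalIntegral, ← AddCircle.integral_haarAddCircle]
    refine integral_congr_ae ?_
    filter_upwards [hf'.coeFn_toLp, hg'.coeFn_toLp] with x hfx hgx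
    rw [hfx, hgx]
    rfl

theorem fourierCoeffOn_cosKernel (s w : ℂ) (n : ℤ) :
    fourierCoeffOn neg_pi_div_two_lt_pi_div_two (cosKernel s w) n =
      (π : ℂ)⁻¹ * cosIntegral s (w - 2 * n) := by
  have hT : π / 2 - -(π / 2) = π := by ring
  have hπ : (π : ℂ) ≠ 0 := ofReal_ne_zero.mpr Real.pi_ne_zero
  rw [fourierCoeffOn_eq_integral, hT, cosIntegral, one_div, real_smul, ofReal_inv]
  congr 2 with x
  rw [sub_eq_add_neg, ← cosKernel_mul_exp, fourier_coe_apply, smul_eq_mul, mul_comm]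
  congr 2
  push_cast
  field_simp

end Parseval

section Dougall

open Filter Topology MeasureTheory Set
open scoped Real

theorem cosIntegral_add_sub_two {c e : ℂ} (h : 2 < (c + e).re) :
    cosIntegral (c + e - 2) (c - e) = π * (Gamma (c + e - 1) * (Gamma c)⁻¹ * (Gamma e)⁻¹) := by
  rw [cosIntegral_eq_pi_mul_cauchyRatio (by simpa using h), cauchyRatio]
  ring_nf

theorem fourierCoeffOn_cosKernel_add_sub_two {c e : ℂ} (h : 2 < (c + e).re) (n : ℤ) :
    fourierCoeffOn neg_pi_div_two_lt_pi_div_two (cosKernel (c + e - 2) (c - e)) n =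
      Gamma (c + e - 1) * ((Gamma (c - n))⁻¹ * (Gamma (e + n))⁻¹) := by
  have hsum : c - n + (e + n) = c + e := by ring
  have hJ := cosIntegral_add_sub_two (c := c - n) (e := e + n) (by rwa [hsum])
  rw [hsum, show c - n - (e + n) = c - e - 2 * n by ring] at hJ
  rw [fourierCoeffOn_cosKernel, hJ, inv_mul_cancel_left₀ (ofReal_ne_zero.mpr Real.pi_ne_zero),
    mul_assoc]

theorem memLp_restrict_Ioc_of_continuousOn_Icc {E : Type*} [NormedAddCommGroup E] {f : ℝ → E}
    {a b : ℝ} (hf : ContinuousOn f (Icc a b)) (p : ENNReal) :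
    MemLp f p (volume.restrict (Ioc a b)) := by
  obtain ⟨C, hC⟩ := isCompact_Icc.exists_bound_of_continuousOn hf
  refine .of_bound ((hf.mono Ioc_subset_Icc_self).aestronglyMeasurable measurableSet_Ioc) C ?_
  filter_upwards [ae_restrict_mem measurableSet_Ioc] with x hx using hC x (Ioc_subset_Icc_self hx)

/-- The general term `1 / (Γ(c+k) Γ(d+k) Γ(e-k) Γ(f-k))` of the bilateral series. It is symmetric
under exchanging `(c, d)` and `(e, f)` together with `k` and `-k`, and it is defined for all
parameters because `(Gamma z)⁻¹` is the entire function `1/Γ`. -/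
noncomputable def dougallTerm (c d e f : ℂ) (k : ℤ) : ℂ :=
  (Gamma (c + k))⁻¹ * (Gamma (d + k))⁻¹ * (Gamma (e - k))⁻¹ * (Gamma (f - k))⁻¹

/-- The sum `Γ(c+d+e+f-3) / (Γ(c+e-1) Γ(c+f-1) Γ(d+e-1) Γ(d+f-1))` of the bilateral series. -/
noncomputable def dougallValue (c d e f : ℂ) : ℂ :=
  Gamma (c + d + e + f - 3) * (Gamma (c + e - 1))⁻¹ * (Gamma (c + f - 1))⁻¹ *
    (Gamma (d + e - 1))⁻¹ * (Gamma (d + f - 1))⁻¹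

theorem integral_cosKernel_mul_cosKernel {c d e f : ℂ} (hce : 2 < (c + e).re)
    (hfd : 2 < (f + d).re) :
    (π / 2 - -(π / 2))⁻¹ • ∫ x in -(π / 2)..π / 2,
        cosKernel (c + e - 2) (c - e) x * cosKernel (f + d - 2) (f - d) x =
      Gamma (c + d + e + f - 3) * (Gamma (c + f - 1))⁻¹ * (Gamma (d + e - 1))⁻¹ := by
  have hs : 0 < (c + e - 2).re := by simpa using hce
  have ht : 0 < (f + d - 2).re := by simpa using hfd
  have hJ := cosIntegral_add_sub_two (c := c + f - 1) (e := d + e - 1)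
    (by simp only [add_re, sub_re, one_re] at hce hfd ⊢; linarith)
  simp only [cosKernel_mul_cosKernel hs ht]
  rw [← cosIntegral, sub_neg_eq_add, add_halves, real_smul, ofReal_inv,
    inv_mul_eq_iff_eq_mul₀ (ofReal_ne_zero.mpr Real.pi_ne_zero)]
  ring_nf at hJ ⊢
  exact hJ

theorem hasSum_dougallTerm_of_two_lt_re {c d e f : ℂ} (hce : 2 < (c + e).re)
    (hdf : 2 < (d + f).re) :
    HasSum (dougallTerm c d e f) (dougallValue c d e f) := by
  have hfd : 2 < (f + d).re := by rwa [add_comm]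
  have hs : 0 < (c + e - 2).re := by simpa using hce
  have ht : 0 < (f + d - 2).re := by simpa using hfd
  have hΓce : Gamma (c + e - 1) ≠ 0 :=
    Gamma_ne_zero_of_re_pos (by simp only [add_re, sub_re, one_re] at hce ⊢; linarith)
  have hΓfd : Gamma (f + d - 1) ≠ 0 :=
    Gamma_ne_zero_of_re_pos (by simp only [add_re, sub_re, one_re] at hfd ⊢; linarith)
  have hparseval := hasSum_fourierCoeffOn_neg_mul_fourierCoeffOn neg_pi_div_two_lt_pi_div_two
    (memLp_restrict_Ioc_of_continuousOn_Icc (continuous_cosKernel hs (c - e)).continuousOn 2)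
    (memLp_restrict_Ioc_of_continuousOn_Icc (continuous_cosKernel ht (f - d)).continuousOn 2)
  rw [integral_cosKernel_mul_cosKernel hce hfd] at hparseval
  have hvalue : dougallValue c d e f = (Gamma (c + e - 1))⁻¹ * (Gamma (f + d - 1))⁻¹ *
      (Gamma (c + d + e + f - 3) * (Gamma (c + f - 1))⁻¹ * (Gamma (d + e - 1))⁻¹) := by
    rw [dougallValue, add_comm f d]
    ring
  rw [hvalue]
  refine (hparseval.mul_left _).congr_fun fun k ↦ ?_
  rw [fourierCoeffOn_cosKernel_add_sub_two hce, fourierCoeffOn_cosKernel_add_sub_two hfd,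
    dougallTerm, Int.cast_neg, sub_neg_eq_add, ← sub_eq_add_neg]
  field_simp

theorem inv_Gamma_eq_Gamma_one_sub_mul_sin {z : ℂ} (h : Gamma (1 - z) ≠ 0) :
    (Gamma z)⁻¹ = Gamma (1 - z) * (sin (π * z) / π) := by
  rw [← mul_right_inj' (inv_ne_zero h), inv_mul_cancel_left₀ h, ← mul_inv, mul_comm (Gamma _),
    Gamma_mul_Gamma_one_sub, inv_div]

theorem isBigO_sin_pi_mul_sub_natCast (e : ℂ) :
    (fun n : ℕ ↦ sin (π * (e - n))) =O[atTop] fun _ ↦ (1 : ℂ) := by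
  refine .of_bound ‖sin (π * e)‖ (.of_forall fun n ↦ ?_)
  simp [mul_sub, mul_comm (π : ℂ) n, sin_antiperiodic.sub_nat_mul_eq]

theorem eventually_Gamma_add_nat_ne_zero (z : ℂ) : ∀ᶠ n : ℕ in atTop, Gamma (z + n) ≠ 0 := by
  obtain ⟨N, hN⟩ := exists_nat_gt (-z.re)
  filter_upwards [eventually_ge_atTop N] with n hn
  have hNn : (N : ℝ) ≤ n := Nat.cast_le.mpr hn
  exact Gamma_ne_zero_of_re_pos (by rw [add_re, natCast_re]; linarith)

theorem isBigO_inv_Gamma_mul_inv_Gamma (c e : ℂ) :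
    (fun n : ℕ ↦ (Gamma (c + n))⁻¹ * (Gamma (e - n))⁻¹) =O[atTop]
      fun n : ℕ ↦ (n : ℝ) ^ (1 - (c + e).re) := by
  have hratio := (isEquivalent_Gamma_add_nat c).inv.mul (isEquivalent_Gamma_add_nat (1 - e))
  have hsin := (isBigO_sin_pi_mul_sub_natCast e).const_mul_left (π : ℂ)⁻¹
  refine ((hratio.isBigO.mul hsin).congr' ?_ .rfl).trans (.of_bound 1 ?_)
  · filter_upwards [eventually_Gamma_add_nat_ne_zero (1 - e)] with n hn
    rw [sub_add] at hn
    rw [inv_Gamma_eq_Gamma_one_sub_mul_sin hn, Pi.mul_apply, Pi.inv_apply, sub_add]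
    ring
  · filter_upwards [eventually_gt_atTop 0] with n hn
    have hn₀ : (n : ℂ) ≠ 0 := Nat.cast_ne_zero.mpr hn.ne'
    have hΓ : Gamma n ≠ 0 := Gamma_ne_zero_of_re_pos (by simpa using hn)
    have hpow : ((n : ℂ) ^ c * Gamma n)⁻¹ * ((n : ℂ) ^ (1 - e) * Gamma n) =
        (n : ℂ) ^ (1 - (c + e)) := by
      rw [mul_inv, mul_mul_mul_comm, inv_mul_cancel₀ hΓ, mul_one, ← cpow_neg, ← cpow_add _ _ hn₀]
      ring_nf
    rw [Pi.mul_apply, Pi.inv_apply, hpow, mul_one, norm_natCast_cpow_of_pos hn, one_mul,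
      sub_re, one_re]
    exact le_abs_self _

theorem dougallTerm_neg (c d e f : ℂ) (k : ℤ) :
    dougallTerm c d e f (-k) = dougallTerm e f c d k := by
  simp only [dougallTerm, Int.cast_neg, sub_neg_eq_add, ← sub_eq_add_neg]
  ring

theorem dougallTerm_swap (c d e f : ℂ) : dougallTerm c d e f = dougallTerm d c e f := by
  ext k
  rw [dougallTerm, dougallTerm, mul_comm (Gamma _)⁻¹ (Gamma _)⁻¹]

theorem isBigO_dougallTerm_natCast (c d e f : ℂ) :
    (fun n : ℕ ↦ dougallTerm c d e f n) =O[atTop]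
      fun n : ℕ ↦ (n : ℝ) ^ (2 - (c + d + e + f).re) := by
  refine ((isBigO_inv_Gamma_mul_inv_Gamma c e).mul (isBigO_inv_Gamma_mul_inv_Gamma d f)).congr'
    (.of_eq <| funext fun n ↦ ?_) ?_
  · rw [dougallTerm, Int.cast_natCast]
    ring
  · filter_upwards [eventually_gt_atTop 0] with n hn
    rw [← Real.rpow_add (Nat.cast_pos.mpr hn)]
    simp only [add_re]
    ring_nf

theorem summable_dougallTerm {c d e f : ℂ} (h : 3 < (c + d + e + f).re) :
    Summable (dougallTerm c d e f) := by
  have hnat {c d e f : ℂ} (h : 3 < (c + d + e + f).re) :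
      Summable fun n : ℕ ↦ dougallTerm c d e f n :=
    summable_of_isBigO_nat (Real.summable_nat_rpow.mpr (by linarith))
      (isBigO_dougallTerm_natCast c d e f)
  refine .of_nat_of_neg (hnat h) ?_
  simp only [dougallTerm_neg]
  exact hnat (by simp only [add_re] at h ⊢; linarith)

theorem tendsto_add_natCast_mul_dougallTerm {c d e f : ℂ} (h : 3 < (c + d + e + f).re) (a : ℂ) :
    Tendsto (fun n : ℕ ↦ (a + n) * dougallTerm c d e f n) atTop (𝓝 0) := by
  have hlin : (fun n : ℕ ↦ a + n) =O[atTop] fun n : ℕ ↦ (n : ℝ) ^ (1 : ℝ) :=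
    (isEquivalent_add_natCast a).isBigO.trans (.of_bound 1 (by simp))
  refine (hlin.mul (isBigO_dougallTerm_natCast c d e f)).trans_tendsto ?_
  have hexp : 0 < (c + d + e + f).re - 3 := by linarith
  refine ((tendsto_rpow_neg_atTop hexp).comp tendsto_natCast_atTop_atTop).congr' ?_
  filter_upwards [eventually_gt_atTop 0] with n hn
  rw [← Real.rpow_add (Nat.cast_pos.mpr hn), Function.comp_apply]
  ring_nf

theorem hasSum_sub_add_one_of_tendsto {α : Type*} [AddCommGroup α] [TopologicalSpace α]
    [IsTopologicalAddGroup α] [T2Space α] {V : ℤ → α} {l m : α}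
    (hV : Summable fun k ↦ V k - V (k + 1)) (hbot : Tendsto (fun n : ℕ ↦ V (-n)) atTop (𝓝 l))
    (htop : Tendsto (fun n : ℕ ↦ V n) atTop (𝓝 m)) :
    HasSum (fun k ↦ V k - V (k + 1)) (l - m) := by
  have hpartial := SummationFilter.hasSum_symmetricIco_int_iff.mp
    (hV.hasSum.mono_left (SummationFilter.symmetricIco ℤ).le_atTop)
  simp only [Finset.sum_Ico_int_sub] at hpartial
  exact tendsto_nhds_unique hpartial (hbot.sub htop) ▸ hV.hasSum

/- The factor `c - 1 + k` is the rational certificate that Gosper's algorithm finds for the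
contiguous relation on the right. -/
theorem dougallTerm_telescope (c d e f : ℂ) (k : ℤ) :
    (c - 1 + k) * dougallTerm c d e f k -
        (c - 1 + (k + 1 : ℤ)) * dougallTerm c d e f (k + 1) =
      (c + d + e + f - 3) * dougallTerm c d e f k -
        (d + e - 1) * (d + f - 1) * dougallTerm c (d + 1) e f k := by
  have hc := one_div_Gamma_eq_self_mul_one_div_Gamma_add_one (c + k)
  have hd := one_div_Gamma_eq_self_mul_one_div_Gamma_add_one (d + k)
  have he := one_div_Gamma_eq_self_mul_one_div_Gamma_add_one (e - (k + 1))
  have hf := one_div_Gamma_eq_self_mul_one_div_Gamma_add_one (f - (k + 1))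
  rw [add_right_comm] at hd
  rw [sub_add, add_sub_cancel_right] at he hf
  simp only [dougallTerm, Int.cast_add, Int.cast_one, hd, he, hf, ← add_assoc c, ← add_assoc d, hc]
  rw [add_right_comm d 1]
  ring

theorem hasSum_dougallTerm_contiguous {c d e f : ℂ} (h : 3 < (c + d + e + f).re) :
    HasSum (fun k ↦ (c + d + e + f - 3) * dougallTerm c d e f k -
        (d + e - 1) * (d + f - 1) * dougallTerm c (d + 1) e f k) 0 := by
  have h_succ : 3 < (c + (d + 1) + e + f).re := by
    simp only [add_re, one_re] at h ⊢
    linarith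
  have h_symm : 3 < (e + f + c + d).re := by
    simp only [add_re] at h ⊢
    linarith
  have hsummable := ((summable_dougallTerm h).mul_left (c + d + e + f - 3)).sub
    ((summable_dougallTerm h_succ).mul_left ((d + e - 1) * (d + f - 1)))
  have hbot :
      Tendsto (fun n : ℕ ↦ (c - 1 + (-n : ℤ)) * dougallTerm c d e f (-n)) atTop (𝓝 0) := by
    refine neg_zero (G := ℂ) ▸ (tendsto_add_natCast_mul_dougallTerm h_symm (1 - c)).neg.congr
      fun n ↦ ?_
    rw [dougallTerm_neg]
    push_cast
    ring
  have htop := tendsto_add_natCast_mul_dougallTerm h (c - 1)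
  simp only [← dougallTerm_telescope] at hsummable ⊢
  simpa using hasSum_sub_add_one_of_tendsto
    (V := fun k ↦ (c - 1 + k) * dougallTerm c d e f k) hsummable hbot htop

theorem dougallValue_add_one {c d e f : ℂ} (h : c + d + e + f ≠ 3) :
    (d + e - 1) * (d + f - 1) * dougallValue c (d + 1) e f =
      (c + d + e + f - 3) * dougallValue c d e f := by
  have hΓ := Gamma_add_one _ (sub_ne_zero.mpr h)
  have he := one_div_Gamma_eq_self_mul_one_div_Gamma_add_one (d + e - 1)
  have hf := one_div_Gamma_eq_self_mul_one_div_Gamma_add_one (d + f - 1)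
  rw [dougallValue, dougallValue, he, hf,
    show c + (d + 1) + e + f - 3 = c + d + e + f - 3 + 1 by ring, hΓ,
    show d + 1 + e - 1 = d + e - 1 + 1 by ring, show d + 1 + f - 1 = d + f - 1 + 1 by ring]
  ring

theorem hasSum_dougallTerm_of_add_one {c d e f : ℂ} (h : 3 < (c + d + e + f).re)
    (hsum : HasSum (dougallTerm c (d + 1) e f) (dougallValue c (d + 1) e f)) :
    HasSum (dougallTerm c d e f) (dougallValue c d e f) := by
  have hne : c + d + e + f ≠ 3 := fun h3 ↦ by simp [h3] at h
  have hadd := (hasSum_dougallTerm_contiguous h).add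
    (hsum.mul_left ((d + e - 1) * (d + f - 1)))
  simpa only [sub_add_cancel, zero_add, dougallValue_add_one hne,
    hasSum_mul_left_iff (sub_ne_zero.mpr hne)] using hadd

theorem dougallValue_swap (c d e f : ℂ) : dougallValue c d e f = dougallValue d c e f := by
  rw [dougallValue, dougallValue, add_comm c d]
  ring

theorem hasSum_dougallTerm_of_add_one_add_one {c d e f : ℂ} (h : 3 < (c + d + e + f).re)
    (hsum : HasSum (dougallTerm (c + 1) (d + 1) e f) (dougallValue (c + 1) (d + 1) e f)) :
    HasSum (dougallTerm c d e f) (dougallValue c d e f) := by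
  have h_comm : 3 < (d + c + e + f).re := by rwa [add_comm d]
  have h_swap : 3 < (c + 1 + d + e + f).re := by
    simp only [add_re, one_re] at h ⊢
    linarith
  have hd := hasSum_dougallTerm_of_add_one h_swap hsum
  rw [dougallTerm_swap, dougallValue_swap] at hd ⊢
  exact hasSum_dougallTerm_of_add_one h_comm hd

theorem hasSum_dougallTerm {c d e f : ℂ} (h : 3 < (c + d + e + f).re) :
    HasSum (dougallTerm c d e f) (dougallValue c d e f) := by
  obtain ⟨n, hn⟩ := exists_nat_gt (max (2 - (c + e).re) (2 - (d + f).re))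
  obtain ⟨hce, hdf⟩ := max_lt_iff.mp hn
  clear hn
  induction n generalizing c d with
  | zero => exact hasSum_dougallTerm_of_two_lt_re (by simpa using hce) (by simpa using hdf)
  | succ n ih =>
    refine hasSum_dougallTerm_of_add_one_add_one h (ih ?_ ?_ ?_)
    all_goals
      push_cast [add_re, one_re] at *
      linarith

end Dougall

section Poch

theorem poch_natCast (a : ℂ) (n : ℕ) : poch a n = ∏ j ∈ Finset.range n, (a + j) := by
  simp [poch]

theorem poch_neg_natCast (a : ℂ) (n : ℕ) :
    poch a (-n) = (∏ j ∈ Finset.range n, (a - 1 - j))⁻¹ := by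
  rcases n.eq_zero_or_pos with rfl | hn
  · simp [poch]
  · simp [poch, hn.ne']

theorem poch_add_one {a : ℂ} (ha : ∀ m : ℤ, 0 < m → a ≠ m) (k : ℤ) :
    poch a (k + 1) = (a + k) * poch a k := by
  obtain ⟨n, rfl | rfl⟩ := k.eq_nat_or_neg
  · rw [← Nat.cast_succ, poch_natCast, poch_natCast, Finset.prod_range_succ, mul_comm,
      Int.cast_natCast]
  obtain _ | n := n
  · simp [poch]
  · have hne : a - 1 - n ≠ 0 := fun h ↦
      ha (n + 1) (by positivity) (by push_cast; linear_combination h)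
    have hcast : a + (-(n + 1 : ℕ) : ℤ) = a - 1 - n := by
      push_cast
      ring
    rw [show (-(n + 1 : ℕ) + 1 : ℤ) = -n by push_cast; ring, poch_neg_natCast, poch_neg_natCast,
      Finset.prod_range_succ, hcast, mul_inv, mul_left_comm, mul_inv_cancel₀ hne, mul_one]

theorem inv_Gamma_eq_poch_mul_inv_Gamma_add {c : ℂ} (hc : ∀ m : ℤ, 0 < m → c ≠ m) (k : ℤ) :
    (Gamma c)⁻¹ = poch c k * (Gamma (c + k))⁻¹ := by
  have hstep (k : ℤ) : poch c (k + 1) * (Gamma (c + (k + 1 : ℤ)))⁻¹ =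
      poch c k * (Gamma (c + k))⁻¹ := by
    rw [poch_add_one hc, one_div_Gamma_eq_self_mul_one_div_Gamma_add_one (c + k)]
    push_cast
    ring_nf
  induction k with
  | zero => simp [poch]
  | succ k ih => rw [hstep, ih]
  | pred k ih => rw [ih, ← hstep (-k - 1), sub_add_cancel]

theorem inv_poch {c : ℂ} (hc : ∀ m : ℤ, c ≠ m) (k : ℤ) :
    (poch c k)⁻¹ = Gamma c * (Gamma (c + k))⁻¹ := by
  have hΓ : Gamma c ≠ 0 := Gamma_ne_zero fun m h ↦ hc (-m) (by simpa using h)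
  have h := inv_Gamma_eq_poch_mul_inv_Gamma_add (fun m _ ↦ hc m) k
  have hΓk : (Gamma (c + k))⁻¹ ≠ 0 := right_ne_zero_of_mul (h ▸ inv_ne_zero hΓ)
  rw [← inv_inv (Gamma c), h, mul_inv, mul_assoc, inv_mul_cancel₀ hΓk, mul_one]

theorem poch_eq_neg_one_zpow_mul {a : ℂ} (ha : ∀ m : ℤ, 0 < m → a ≠ m) (k : ℤ) :
    poch a k = (-1) ^ k * (Gamma (1 - a) * (Gamma (1 - a - k))⁻¹) := by
  have hΓ : Gamma (1 - a) ≠ 0 :=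
    Gamma_ne_zero fun m h ↦ ha (m + 1) (by positivity) (by push_cast; linear_combination -h)
  have hstep (k : ℤ) : (-1) ^ (k + 1) * (Gamma (1 - a) * (Gamma (1 - a - (k + 1 : ℤ)))⁻¹) =
      (a + k) * ((-1) ^ k * (Gamma (1 - a) * (Gamma (1 - a - k))⁻¹)) := by
    have hcast : 1 - a - (k + 1 : ℤ) + 1 = 1 - a - k := by
      push_cast
      ring
    rw [one_div_Gamma_eq_self_mul_one_div_Gamma_add_one (1 - a - (k + 1 : ℤ)), hcast,
      zpow_add_one₀ (by norm_num)]
    push_cast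
    ring
  induction k with
  | zero => simp [poch, hΓ]
  | succ k ih => rw [poch_add_one ha, ih, ← hstep]
  | pred k ih =>
    have hne : a + (-k - 1 : ℤ) ≠ 0 := fun h ↦
      ha (k + 1) (by omega) (by push_cast at h ⊢; linear_combination h)
    rw [← mul_right_inj' hne, ← poch_add_one ha, ← hstep, sub_add_cancel, ih]

theorem poch_mul_poch_div_poch_mul_poch {a b c d : ℂ}
    (ha : ∀ m : ℤ, 0 < m → a ≠ m) (hb : ∀ m : ℤ, 0 < m → b ≠ m)
    (hc : ∀ m : ℤ, c ≠ m) (hd : ∀ m : ℤ, d ≠ m) (k : ℤ) :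
    poch a k * poch b k / (poch c k * poch d k) =
      Gamma (1 - a) * Gamma (1 - b) * Gamma c * Gamma d *
        dougallTerm c d (1 - a) (1 - b) k := by
  have hsign : (-1 : ℂ) ^ k * (-1) ^ k = 1 := by rw [← mul_zpow, neg_one_mul, neg_neg, one_zpow]
  rw [div_eq_mul_inv, mul_inv, poch_eq_neg_one_zpow_mul ha, poch_eq_neg_one_zpow_mul hb,
    mul_mul_mul_comm ((-1) ^ k), hsign, inv_poch hc, inv_poch hd, dougallTerm]
  ring

end Poch

/-- Dougall's `₂H₂` summation. -/
theorem dougall_2H2 (a b c d : ℂ)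
    (hc : ∀ m : ℤ, c ≠ (m : ℂ)) (hd : ∀ m : ℤ, d ≠ (m : ℂ))
    (ha : ∀ m : ℤ, 0 < m → a ≠ (m : ℂ)) (hb : ∀ m : ℤ, 0 < m → b ≠ (m : ℂ))
    (hre : 0 < (c + d - a - b - 1).re) :
    (Summable fun k : ℤ => ‖poch a k * poch b k / (poch c k * poch d k)‖) ∧
      (∑' k : ℤ, poch a k * poch b k / (poch c k * poch d k)) =
        Complex.Gamma (1 - a) * Complex.Gamma (1 - b) * Complex.Gamma c * Complex.Gamma d *
            Complex.Gamma (c + d - a - b - 1) /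
          (Complex.Gamma (c - a) * Complex.Gamma (c - b) * Complex.Gamma (d - a) *
            Complex.Gamma (d - b)) := by
  have hsum : HasSum (dougallTerm c d (1 - a) (1 - b)) (dougallValue c d (1 - a) (1 - b)) :=
    hasSum_dougallTerm (by simp only [add_re, sub_re, one_re] at hre ⊢; linarith)
  simp only [poch_mul_poch_div_poch_mul_poch ha hb hc hd]
  refine ⟨(hsum.summable.mul_left _).norm, ?_⟩
  rw [tsum_mul_left, hsum.tsum_eq, dougallValue]
  ring_nf
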